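/- Let Γ be a finite Abelian group in the class 𝒢 of order n = 2^α with α ≥ 2. Set m = 2·exp(Γ) if exp(Γ) = |Γ|/2, and m = max{4, exp(Γ)} if exp(Γ) < |Γ|/2. Then there exists a Γ-Kotzig array set KAS_Γ(3, m; n/m). -/

import Mathlib

/-!
Let `e` be the exponent of the non-cyclic group `Γ` of order `2 ^ α`. A complete mapping `θ` of `Γ`
gives three rows `x`, `θ x`, `-(x + θ x)`, each running through `Γ`, with column sums zero. It
remains to choose `θ` and a subgroup `H` of order `m` so that `x` and `θ x` have sum zero over every
coset of `H`; the cosets are then the arrays (`isKotzigArraySet_of_subgroup`). When `H` has a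
complete mapping its elements sum to zero, and then so do those of each coset because `e ∣ m`
(`sum_coset_eq_zero`). So it is enough that `θ` permutes the cosets of `H`, or is additive, or that
`H = Γ`.

The basic block is an explicit complete mapping of `ZMod 2 × ZMod (2 * M)`
(`hasCompleteMapping_zmod`). Let `g ∈ Γ` have order `e`; there is an involution `u` outside `⟨g⟩`
(`exists_involution_not_mem`).

* If `e = |Γ| / 2`, then `Γ = ⟨g, u⟩` is such a block, and `H = Γ`.
* If `e = 2`, then `Γ` is the additive group of a finite field; `θ` is multiplication by an element
  other than `0, 1`, and `H = ⟨g, u⟩` has order `4`.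
* Otherwise `H = ⟨2 • g, u⟩` is a block of order `e` and `Γ ⧸ H` is again non-cyclic
  (`exists_subgroup_step`). By induction on the order `Γ ⧸ H` has a complete mapping, and the
  complete mappings of `H` and `Γ ⧸ H` combine to one of `Γ` permuting the cosets of `H`
  (`exists_completeMapping_of_subgroup`).
-/

/-- `Γ` belongs to the class `𝒢`: its order is odd or it has more than one involution. -/
def InClassG (Γ : Type*) [AddCommGroup Γ] [Fintype Γ] : Prop :=
  Odd (Fintype.card Γ) ∨ 1 < Nat.card {g : Γ // g ≠ 0 ∧ g + g = 0}

/-- A `Γ`-Kotzig array set `KAS_Γ(j, m; t)`. -/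
def IsKotzigArraySet (Γ : Type*) [AddCommGroup Γ] [Fintype Γ] (j m t : ℕ) : Prop :=
  ∃ x : Fin t × Fin j × Fin m → Γ,
    (∀ i : Fin j, Function.Bijective (fun p : Fin t × Fin m => x (p.1, i, p.2))) ∧
    (∀ (s : Fin t) (i : Fin j), ∑ l : Fin m, x (s, i, l) = 0) ∧
    (∀ (s : Fin t) (l : Fin m), ∑ i : Fin j, x (s, i, l) = 0)

/-- `Γ` has a complete mapping: a bijection `θ` of `Γ` such that `x ↦ x + θ x` is a bijection. -/
def HasCompleteMapping (Γ : Type*) [AddCommGroup Γ] : Prop :=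
  ∃ θ : Γ → Γ, Function.Bijective θ ∧ Function.Bijective (fun x => x + θ x)

theorem HasCompleteMapping.of_equiv {A B : Type*} [AddCommGroup A] [AddCommGroup B]
    (e : A ≃+ B) (h : HasCompleteMapping A) : HasCompleteMapping B := by
  obtain ⟨θ, h1, h2⟩ := h
  refine ⟨fun x => e (θ (e.symm x)), e.bijective.comp (h1.comp e.symm.bijective), ?_⟩
  have := e.bijective.comp (h2.comp e.symm.bijective)
  convert this using 2 with x
  simp

theorem HasCompleteMapping.sum_eq_zero {A : Type*} [AddCommGroup A] [Fintype A]
    (h : HasCompleteMapping A) : ∑ x : A, x = 0 := by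
  obtain ⟨θ, h1, h2⟩ := h
  have e1 : ∑ x, θ x = ∑ x, x := h1.sum_comp (fun x => x)
  have e2 : ∑ x, (x + θ x) = ∑ x, x := h2.sum_comp (fun x => x)
  rw [Finset.sum_add_distrib, e1] at e2
  simpa using e2

/-- The witness is `θ (ε, y) = (δ, y + δ)` with `δ = ε + λ`, where `λ` indicates the upper half of
`ZMod (2 * M)`; then `x + θ x = (λ, 2 * y + δ)`, in which `λ` and the parity `δ` of the second
coordinate can be read off. -/
theorem hasCompleteMapping_zmod (M : ℕ) (hM : 0 < M) :
    HasCompleteMapping (ZMod 2 × ZMod (2 * M)) := by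
  have : NeZero (2 * M) := ⟨by omega⟩
  let lam : ZMod (2 * M) → ZMod 2 := fun y => if y.val < M then 0 else 1
  let j : ZMod 2 → ZMod (2 * M) := fun d => (d.val : ℕ)
  let par : ZMod (2 * M) →+* ZMod 2 := ZMod.castHom (dvd_mul_right 2 M) (ZMod 2)
  have hparj : ∀ d, par (j d) = d := by
    intro d
    simp only [j, map_natCast]
    exact ZMod.natCast_zmod_val d
  refine ⟨fun p => (p.1 + lam p.2, p.2 + j (p.1 + lam p.2)),
    Finite.injective_iff_bijective.1 ?_, Finite.injective_iff_bijective.1 ?_⟩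
  · rintro ⟨a, y⟩ ⟨b, z⟩ h
    simp only [Prod.mk.injEq] at h
    obtain ⟨h1, h2⟩ := h
    rw [h1] at h2
    have h3 : y = z := add_right_cancel h2
    subst h3
    simpa using h1
  · rintro ⟨a, y⟩ ⟨b, z⟩ h
    simp only [Prod.mk_add_mk, Prod.mk.injEq] at h
    obtain ⟨h1, h2⟩ := h
    have hl : lam y = lam z := by
      rw [← add_assoc, ← add_assoc, CharTwo.add_self_eq_zero, CharTwo.add_self_eq_zero] at h1
      simpa using h1
    have hd : a + lam y = b + lam z := by
      have := congrArg par h2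
      simpa only [map_add, hparj, ← add_assoc, CharTwo.add_self_eq_zero, zero_add] using this
    have hab : a = b := by rw [hl] at hd; exact add_right_cancel hd
    rw [hd, ← add_assoc, ← add_assoc] at h2
    have h3 : y + y = z + z := add_right_cancel h2
    have h4 : ((y.val + y.val : ℕ) : ZMod (2 * M)) = ((z.val + z.val : ℕ) : ZMod (2 * M)) := by
      simpa using h3
    rw [ZMod.natCast_eq_natCast_iff] at h4
    have h5 : y.val ≡ z.val [MOD M] := by
      rw [← two_mul, ← two_mul] at h4
      exact Nat.ModEq.mul_left_cancel' (by norm_num) h4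
    have hy := ZMod.val_lt y
    have hz := ZMod.val_lt z
    have h6 : y.val = z.val := by
      simp only [lam] at hl
      by_cases c1 : y.val < M <;> by_cases c2 : z.val < M
      · exact h5.eq_of_lt_of_lt c1 c2
      · simp [c1, c2] at hl
      · simp [c1, c2] at hl
      · have h7 : y.val - M + M ≡ z.val - M + M [MOD M] := by
          rwa [Nat.sub_add_cancel (by omega), Nat.sub_add_cancel (by omega)]
        have h8 := (Nat.ModEq.add_right_cancel' M h7).eq_of_lt_of_lt (by omega) (by omega)
        omega
    rw [hab, ZMod.val_injective _ h6]

/-- A map that permutes the cosets of `H` through `r` and acts on each coset through the injection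
`f` of `H` is bijective. -/
theorem bijective_of_coset {Γ : Type*} [AddCommGroup Γ] [Finite Γ] (H : AddSubgroup Γ)
    (F : Γ → Γ) (f : H → H) (r : Γ ⧸ H → Γ) (hf : Function.Injective f)
    (hr : Function.Injective (fun q => (r q : Γ ⧸ H)))
    (hF : ∀ x : Γ, ∀ h : H, (h : Γ) = x - (x : Γ ⧸ H).out → F x = f h + r (x : Γ ⧸ H)) :
    Function.Bijective F := by
  refine Finite.injective_iff_bijective.1 ?_
  have key : ∀ x : Γ, x - (x : Γ ⧸ H).out ∈ H := fun x => by
    rw [← QuotientAddGroup.eq_zero_iff, QuotientAddGroup.mk_sub, QuotientAddGroup.out_eq', sub_self]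
  intro x y hxy
  rw [hF x ⟨_, key x⟩ rfl, hF y ⟨_, key y⟩ rfl] at hxy
  have hq : (x : Γ ⧸ H) = y := by
    apply hr
    have := congrArg (fun z : Γ => (z : Γ ⧸ H)) hxy
    have hz : ∀ h : H, ((h : Γ) : Γ ⧸ H) = 0 := fun h =>
      (QuotientAddGroup.eq_zero_iff _).2 h.2
    simpa [hz] using this
  have hxy' := hxy.trans (congrArg (fun q => (f ⟨_, key y⟩ : Γ) + r q) hq.symm)
  have h2 := congrArg Subtype.val (hf (Subtype.ext (add_right_cancel hxy')))
  simp only [hq] at h2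
  exact sub_left_injective h2

/-- Complete mappings of `H` and of `Γ ⧸ H` combine, via coset representatives, to a complete
mapping of `Γ` that permutes the cosets of `H`. -/
theorem exists_completeMapping_of_subgroup {Γ : Type*} [AddCommGroup Γ] [Finite Γ]
    (H : AddSubgroup Γ) (hH : HasCompleteMapping H) (hQ : HasCompleteMapping (Γ ⧸ H)) :
    ∃ (θ : Γ → Γ) (φ : Γ ⧸ H → Γ ⧸ H), Function.Bijective θ ∧
      Function.Bijective (fun x => x + θ x) ∧ Function.Bijective φ ∧
      ∀ x : Γ, (θ x : Γ ⧸ H) = φ x := by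
  obtain ⟨f, f1, f2⟩ := hH
  obtain ⟨φ, p1, p2⟩ := hQ
  have key : ∀ x : Γ, x - (x : Γ ⧸ H).out ∈ H := fun x => by
    rw [← QuotientAddGroup.eq_zero_iff, QuotientAddGroup.mk_sub, QuotientAddGroup.out_eq', sub_self]
  refine ⟨fun x => f ⟨_, key x⟩ + (φ x).out, φ, ?_, ?_, p1, ?_⟩
  · refine bijective_of_coset H _ f (fun q => (φ q).out) f1.1 ?_ ?_
    · simpa using p1.1
    · rintro x h hh
      have : h = ⟨_, key x⟩ := Subtype.ext hh
      rw [this]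
  · refine bijective_of_coset H _ (fun h => h + f h) (fun q => q.out + (φ q).out) f2.1 ?_ ?_
    · simpa using p2.1
    · rintro x h hh
      have : h = ⟨_, key x⟩ := Subtype.ext hh
      rw [this]
      simp only [AddSubgroup.coe_add]
      abel
  · intro x
    have hz : ∀ h : H, ((h : Γ) : Γ ⧸ H) = 0 := fun h =>
      (QuotientAddGroup.eq_zero_iff _).2 h.2
    simp [hz]

/-- If `u` is an involution outside `⟨g⟩` and `g` has order `N = 2 * M`, then `⟨g, u⟩` is a copy of
`ZMod 2 × ZMod N`, which has a complete mapping. -/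
theorem exists_twoGen {Γ : Type*} [AddCommGroup Γ] (g u : Γ) (M : ℕ)
    (hM : 0 < M) (hg : addOrderOf g = 2 * M) (hu : 2 • u = 0)
    (hug : u ∉ AddSubgroup.zmultiples g) :
    ∃ H : AddSubgroup Γ, HasCompleteMapping H ∧ Nat.card H = 4 * M ∧ g ∈ H ∧
      ∀ h ∈ H, (2 * M) • h = 0 := by
  have : NeZero (2 * M) := ⟨by omega⟩
  let a : ZMod 2 →+ Γ := ZMod.lift 2 ⟨zmultiplesHom Γ u, by
    rw [zmultiplesHom_apply, natCast_zsmul, hu]⟩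
  let b : ZMod (2 * M) →+ Γ := ZMod.lift (2 * M) ⟨zmultiplesHom Γ g, by
    rw [zmultiplesHom_apply, natCast_zsmul, ← hg, addOrderOf_nsmul_eq_zero]⟩
  have ha1 : a 1 = u := by
    have := ZMod.lift_coe 2 (⟨zmultiplesHom Γ u, by
    rw [zmultiplesHom_apply, natCast_zsmul, hu]⟩ :
      {f : ℤ →+ Γ // f (2 : ℕ) = 0}) 1
    simpa [a] using this
  have hb : ∀ k : ℕ, b k = k • g := by
    intro k
    have := ZMod.lift_coe (2 * M) (⟨zmultiplesHom Γ g, by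
        rw [zmultiplesHom_apply, natCast_zsmul, ← hg, addOrderOf_nsmul_eq_zero]⟩ : {f : ℤ →+ Γ // f ((2 * M : ℕ) : ℤ) = 0}) (k : ℤ)
    simpa [b] using this
  let f : ZMod 2 × ZMod (2 * M) →+ Γ := AddMonoidHom.coprod a b
  have hf : Function.Injective f := by
    rw [injective_iff_map_eq_zero]
    rintro ⟨x, y⟩ h
    simp only [f, AddMonoidHom.coprod_apply] at h
    have hy : b y = y.val • g := by rw [← hb, ZMod.natCast_zmod_val]
    have hx : x = 0 := by
      have : ∀ x : ZMod 2, x = 0 ∨ x = 1 := by decide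
      rcases this x with h0 | h0
      · exact h0
      · exfalso
        rw [h0, ha1, hy] at h
        apply hug
        rw [eq_neg_of_add_eq_zero_left h]
        exact neg_mem (AddSubgroup.nsmul_mem_zmultiples g _)
    subst hx
    rw [map_zero, zero_add, hy] at h
    have h1 := addOrderOf_dvd_of_nsmul_eq_zero h
    rw [hg] at h1
    have h2 := Nat.eq_zero_of_dvd_of_lt h1 (ZMod.val_lt y)
    rw [ZMod.val_eq_zero] at h2
    rw [h2]; rfl
  refine ⟨f.range, (hasCompleteMapping_zmod M hM).of_equiv (AddMonoidHom.ofInjective hf), ?_, ?_, ?_⟩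
  · rw [← Nat.card_congr (AddMonoidHom.ofInjective hf).toEquiv, Nat.card_prod]
    simp
    ring
  · refine ⟨(0, ((1 : ℕ) : ZMod (2 * M))), ?_⟩
    simp only [f, AddMonoidHom.coprod_apply, hb]
    simp
  · rintro _ ⟨⟨x, y⟩, rfl⟩
    rw [← map_nsmul]
    have : (2 * M) • ((x, y) : ZMod 2 × ZMod (2 * M)) = 0 := by
      ext
      · change (2 * M) • x = 0
        rw [mul_smul, two_nsmul, CharTwo.add_self_eq_zero]
      · change (2 * M) • y = 0
        rw [nsmul_eq_mul, ZMod.natCast_self, zero_mul]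
    rw [this, map_zero]

/-- Some involution lies outside `⟨g⟩` when `g` has maximal order `2 * M` in a non-cyclic
`2`-group: if `2 • x = k • g` with `x ∉ ⟨g⟩` then maximality forces `k` to be even, and
`x - (k / 2) • g` is such an involution. -/
theorem exists_involution_not_mem {Γ : Type*} [AddCommGroup Γ] [Finite Γ] (α : ℕ)
    (hcard : Nat.card Γ = 2 ^ α) (hc : ¬ IsAddCyclic Γ) (g : Γ) (M : ℕ) (hM : 0 < M)
    (hg : addOrderOf g = 2 * M) (he : ∀ x : Γ, (2 * M) • x = 0) :
    ∃ u : Γ, 2 • u = 0 ∧ u ∉ AddSubgroup.zmultiples g := by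
  have hne : Nat.card (Γ ⧸ AddSubgroup.zmultiples g) ≠ 1 := by
    intro h
    apply hc
    have h1 : AddSubgroup.zmultiples g = ⊤ := AddSubgroup.index_eq_one.1 h
    exact ⟨g, fun x => AddSubgroup.mem_zmultiples_iff.1 (h1 ▸ AddSubgroup.mem_top x)⟩
  have hdvd : Nat.card (Γ ⧸ AddSubgroup.zmultiples g) ∣ 2 ^ α := by
    rw [← hcard]; exact AddSubgroup.card_quotient_dvd_card _
  have h2 : 2 ∣ Nat.card (Γ ⧸ AddSubgroup.zmultiples g) := by
    obtain ⟨k, -, hk⟩ := (Nat.dvd_prime_pow Nat.prime_two).1 hdvd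
    rw [hk] at hne ⊢
    exact dvd_pow_self 2 (by rintro rfl; simp at hne)
  obtain ⟨q, hq⟩ := exists_prime_addOrderOf_dvd_card' 2 h2
  obtain ⟨x, rfl⟩ := QuotientAddGroup.mk_surjective q
  have hx : x ∉ AddSubgroup.zmultiples g := by
    intro h
    rw [(QuotientAddGroup.eq_zero_iff x).2 h] at hq
    simp at hq
  have hx2 : 2 • x ∈ AddSubgroup.zmultiples g := by
    rw [← QuotientAddGroup.eq_zero_iff, QuotientAddGroup.mk_nsmul, ← hq]
    exact addOrderOf_nsmul_eq_zero _
  obtain ⟨k, hk⟩ := AddSubgroup.mem_zmultiples_iff.1 hx2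
  have h3 : ((M : ℤ) * k) • g = 0 := by
    rw [mul_smul, hk, natCast_zsmul, ← mul_smul, mul_comm]
    exact he x
  rw [← addOrderOf_dvd_iff_zsmul_eq_zero, hg] at h3
  have h4 : (2 : ℤ) ∣ k := by
    obtain ⟨c, hc⟩ := h3
    refine ⟨c, ?_⟩
    have hM' : (M : ℤ) ≠ 0 := by exact_mod_cast hM.ne'
    apply mul_left_cancel₀ hM'
    rw [hc]; push_cast; ring
  obtain ⟨j, rfl⟩ := h4
  refine ⟨x - j • g, ?_, ?_⟩
  · rw [smul_sub, ← hk, mul_smul, two_zsmul, two_nsmul, sub_self]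
  · intro h
    apply hx
    have := add_mem h (AddSubgroup.zsmul_mem_zmultiples g j)
    simpa using this

/-- The inductive step: when the exponent `4 * M` is at least `4` and the index of a cyclic
subgroup of that order is a multiple of `4`, take `H = ⟨2 • g, u⟩` for `g` of maximal order and an
involution `u ∉ ⟨g⟩`. Were `Γ ⧸ H` cyclic, `g` would be twice something modulo `H`, and
multiplication by `2 * M` (which kills `H`) would give `(2 * M) • g = 0`. -/
theorem exists_subgroup_step {Γ : Type*} [AddCommGroup Γ] [Finite Γ] (α : ℕ)
    (hcard : Nat.card Γ = 2 ^ α) (hc : ¬ IsAddCyclic Γ) (g : Γ) (M : ℕ) (hM : 0 < M)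
    (hg : addOrderOf g = 2 * (2 * M)) (he : ∀ x : Γ, (2 * (2 * M)) • x = 0)
    (hbig : 4 * (4 * M) ∣ Nat.card Γ) :
    ∃ H : AddSubgroup Γ, HasCompleteMapping H ∧ Nat.card H = 4 * M ∧ ¬ IsAddCyclic (Γ ⧸ H) := by
  obtain ⟨u, hu, hug⟩ := exists_involution_not_mem α hcard hc g (2 * M) (by omega) hg he
  have hg2 : addOrderOf (2 • g) = 2 * M := by
    rw [addOrderOf_nsmul_of_dvd (by norm_num) (by rw [hg]; exact dvd_mul_right _ _), hg]
    omega
  have hug2 : u ∉ AddSubgroup.zmultiples (2 • g) := by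
    intro h
    apply hug
    exact (AddSubgroup.zmultiples_le_of_mem (AddSubgroup.nsmul_mem_zmultiples g 2)) h
  obtain ⟨H, hH, hHc, hgH, hHk⟩ := exists_twoGen (2 • g) u M hM hg2 hu hug2
  refine ⟨H, hH, hHc, fun hcyc => ?_⟩
  have h4 : 4 ∣ Nat.card (Γ ⧸ H) := by
    rw [AddSubgroup.card_eq_card_quotient_mul_card_addSubgroup H, hHc] at hbig
    exact Nat.dvd_of_mul_dvd_mul_right (by omega) hbig
  obtain ⟨c, hgen⟩ := hcyc.exists_generator
  obtain ⟨k, hk⟩ := AddSubgroup.mem_zmultiples_iff.1 (hgen (g : Γ ⧸ H))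
  have h2k : (2 * k) • c = 0 := by
    rw [mul_smul, hk]
    have := (QuotientAddGroup.eq_zero_iff (2 • g)).2 hgH
    rw [QuotientAddGroup.mk_nsmul] at this
    exact_mod_cast this
  have hord : addOrderOf c = Nat.card (Γ ⧸ H) := addOrderOf_eq_card_of_forall_mem_zmultiples hgen
  have h5 : (4 : ℤ) ∣ 2 * k := by
    refine dvd_trans ?_ (addOrderOf_dvd_iff_zsmul_eq_zero.2 h2k)
    rw [hord]
    exact_mod_cast h4
  obtain ⟨j, rfl⟩ : (2 : ℤ) ∣ k := by omega
  obtain ⟨w, rfl⟩ := QuotientAddGroup.mk_surjective c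
  have h6 : g - (2 * j) • w ∈ H := by
    rw [← QuotientAddGroup.eq_zero_iff, QuotientAddGroup.mk_sub, QuotientAddGroup.mk_zsmul, hk,
      sub_self]
  have h7 := hHk _ h6
  have h8 : (2 * M) • ((2 * j) • w) = 0 := by
    rw [mul_comm 2 j, mul_smul j 2 w, smul_comm (2 * M) j, ofNat_zsmul, ← mul_smul (2 * M) 2 w,
      mul_comm (2 * M) 2, he, smul_zero]
  rw [smul_sub, h8, sub_zero] at h7
  have h9 := Nat.le_of_dvd (by omega) (addOrderOf_dvd_of_nsmul_eq_zero h7)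
  omega

/-- In an elementary abelian `2`-group of order `2 ^ α` the complete mapping can be taken additive:
identify `Γ` with the field of `2 ^ α` elements and multiply by an element other than `0, 1`. -/
theorem exists_linear_completeMapping {Γ : Type*} [AddCommGroup Γ] [Finite Γ] (α : ℕ) (hα : 2 ≤ α)
    (hcard : Nat.card Γ = 2 ^ α) (he : ∀ x : Γ, 2 • x = 0) :
    ∃ θ : Γ →+ Γ, Function.Bijective θ ∧ Function.Bijective (fun x => x + θ x) := by
  let : Module (ZMod 2) Γ := AddCommGroup.zmodModule he
  have : Module.Finite (ZMod 2) Γ := Module.Finite.of_finite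
  have hr : Module.finrank (ZMod 2) Γ = α := by
    have := Module.natCard_eq_pow_finrank (K := ZMod 2) (V := Γ)
    rw [hcard, Nat.card_zmod] at this
    exact (Nat.pow_right_injective le_rfl this).symm
  have e : Γ ≃ₗ[ZMod 2] GaloisField 2 α := LinearEquiv.ofFinrankEq _ _ (by
    rw [hr, GaloisField.finrank 2 (by omega)])
  obtain ⟨w, hw⟩ : ∃ w : GaloisField 2 α, w ∉ ({0, 1} : Set (GaloisField 2 α)) := by
    by_contra! h
    have h1 : ({0, 1} : Set (GaloisField 2 α)) = Set.univ := Set.eq_univ_of_forall h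
    have h2 := Set.ncard_univ (GaloisField 2 α)
    rw [← h1, GaloisField.card 2 α (by omega)] at h2
    have h3 := Set.ncard_insert_le (0 : GaloisField 2 α) {1}
    rw [Set.ncard_singleton] at h3
    have h4 : 2 ^ 2 ≤ 2 ^ α := Nat.pow_le_pow_right (by norm_num) hα
    omega
  simp only [Set.mem_insert_iff, Set.mem_singleton_iff, not_or] at hw
  have hw1 : 1 + w ≠ 0 := fun h => hw.2 (CharTwo.add_eq_zero.1 h).symm
  refine ⟨e.symm.toAddMonoidHom.comp ((AddMonoidHom.mulLeft w).comp
    e.toLinearMap.toAddMonoidHom), ?_, ?_⟩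
  · exact e.symm.bijective.comp ((mulLeft_bijective₀ w hw.1).comp e.bijective)
  · have := e.symm.bijective.comp ((mulLeft_bijective₀ (1 + w) hw1).comp e.bijective)
    convert this using 2 with x
    simp [add_mul]

/-- The exponent of a non-cyclic abelian group of order `2 ^ α` has the form `2 * 2 ^ k`, is a proper
divisor of the order, and is attained by some `g`. -/
theorem exists_max_order {Γ : Type*} [AddCommGroup Γ] [Finite Γ] (α : ℕ)
    (hcard : Nat.card Γ = 2 ^ α) (hc : ¬ IsAddCyclic Γ) :
    ∃ (g : Γ) (k : ℕ), addOrderOf g = 2 * 2 ^ k ∧ AddMonoid.exponent Γ = 2 * 2 ^ k ∧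
      (∀ x : Γ, (2 * 2 ^ k) • x = 0) ∧ k + 1 < α := by
  obtain ⟨g, hg⟩ := AddMonoid.exists_addOrderOf_eq_exponent
    (AddMonoid.ExponentExists.of_finite (G := Γ))
  have hd : AddMonoid.exponent Γ ∣ 2 ^ α := hcard ▸ AddGroup.exponent_dvd_nat_card
  obtain ⟨l, hl, hl2⟩ := (Nat.dvd_prime_pow Nat.prime_two).1 hd
  have hlα : l ≠ α := by
    rintro rfl
    exact hc (isAddCyclic_of_addOrderOf_eq_card g (by rw [hg, hl2, hcard]))
  have hl0 : l ≠ 0 := by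
    rintro rfl
    apply hc
    have : Subsingleton Γ := AddMonoid.exp_eq_one_iff.1 (by simpa using hl2)
    infer_instance
  obtain ⟨k, rfl⟩ := Nat.exists_eq_succ_of_ne_zero hl0
  have h1 : (2 : ℕ) ^ (k.succ) = 2 * 2 ^ k := by rw [pow_succ, mul_comm]
  rw [h1] at hl2
  refine ⟨g, k, by rw [hg, hl2], hl2, fun x => ?_, by omega⟩
  rw [← hl2]; exact AddMonoid.exponent_nsmul_eq_zero x

/-- Every non-cyclic abelian `2`-group has a complete mapping. -/
theorem hasCompleteMapping_of_not_cyclic.{v} (α : ℕ) : ∀ (Γ : Type v) [AddCommGroup Γ] [Finite Γ],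
    Nat.card Γ = 2 ^ α → ¬ IsAddCyclic Γ → HasCompleteMapping Γ := by
  induction α using Nat.strong_induction_on with
  | _ α ih =>
    intro Γ _ _ hcard hc
    obtain ⟨g, k, hg, -, he, hk⟩ := exists_max_order α hcard hc
    by_cases hk1 : α = k + 2
    · obtain ⟨u, hu, hug⟩ := exists_involution_not_mem α hcard hc g (2 ^ k) (by positivity) hg he
      obtain ⟨H, hH, hHc, -, -⟩ := exists_twoGen g u (2 ^ k) (by positivity) hg hu hug
      have hT : H = ⊤ := AddSubgroup.eq_top_of_card_eq H (by rw [hHc, hcard, hk1]; ring)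
      subst hT
      exact hH.of_equiv AddSubgroup.topEquiv
    · rcases Nat.eq_zero_or_pos k with rfl | hkpos
      · obtain ⟨θ, h1, h2⟩ := exists_linear_completeMapping α (by omega) hcard (by simpa using he)
        exact ⟨θ, h1, h2⟩
      · obtain ⟨l, rfl⟩ : ∃ l, k = l + 1 := ⟨k - 1, by omega⟩
        have hp : (2 : ℕ) ^ (l + 1) = 2 * 2 ^ l := by rw [pow_succ, mul_comm]
        rw [hp] at hg he
        obtain ⟨H, hH, hHc, hQ⟩ := exists_subgroup_step α hcard hc g (2 ^ l) (by positivity) hg he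
          (by rw [hcard, show 4 * (4 * 2 ^ l) = 2 ^ (l + 4) by ring]; exact pow_dvd_pow 2 (by omega))
        have hQc : Nat.card (Γ ⧸ H) = 2 ^ (α - (l + 2)) := by
          have := AddSubgroup.card_eq_card_quotient_mul_card_addSubgroup H
          rw [hHc, hcard, show 4 * 2 ^ l = 2 ^ (l + 2) by ring] at this
          apply Nat.eq_of_mul_eq_mul_right (show 0 < 2 ^ (l + 2) by positivity)
          rw [← this, ← pow_add]
          congr 1; omega
        obtain ⟨θ, -, h1, h2, -, -⟩ := exists_completeMapping_of_subgroup H hH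
          (ih _ (by omega) (Γ ⧸ H) hQc hQ)
        exact ⟨θ, h1, h2⟩

open scoped Classical in
/-- Here `∑ x ∈ r + H, x = |H| • r + ∑ h ∈ H, h`, and both terms vanish. -/
theorem sum_coset_eq_zero {Γ : Type*} [AddCommGroup Γ] [Fintype Γ] (H : AddSubgroup Γ)
    (hH : HasCompleteMapping H) (hm : ∀ x : Γ, Nat.card H • x = 0) (q : Γ ⧸ H) :
    ∑ x : {x : Γ // (x : Γ ⧸ H) = q}, (x : Γ) = 0 := by
  have : Fintype H := Fintype.ofFinite H
  obtain ⟨r, rfl⟩ := QuotientAddGroup.mk_surjective q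
  let e : H ≃ {x : Γ // (x : Γ ⧸ H) = (r : Γ ⧸ H)} :=
    { toFun := fun h => ⟨r + h, by
        rw [QuotientAddGroup.mk_add, (QuotientAddGroup.eq_zero_iff (h : Γ)).2 h.2, add_zero]⟩
      invFun := fun x => ⟨-r + x, QuotientAddGroup.eq.1 x.2.symm⟩
      left_inv := fun h => by simp
      right_inv := fun x => by simp }
  rw [← e.sum_comp]
  simp only [e, Equiv.coe_fn_mk]
  rw [Finset.sum_add_distrib, Finset.sum_const, Finset.card_univ, ← Nat.card_eq_fintype_card, hm,
    zero_add]
  have := congrArg H.subtype hH.sum_eq_zero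
  simpa using this

open scoped Classical in
/-- A complete mapping `θ` gives the rows `x`, `θ x`, `-(x + θ x)`; the cosets of `H` are the arrays
of the set. -/
theorem isKotzigArraySet_of_subgroup {Γ : Type*} [AddCommGroup Γ] [Fintype Γ] (H : AddSubgroup Γ)
    (hH : HasCompleteMapping H) (hm : ∀ x : Γ, Nat.card H • x = 0) (θ : Γ → Γ)
    (h1 : Function.Bijective θ) (h2 : Function.Bijective (fun x => x + θ x))
    (h3 : ∀ q : Γ ⧸ H, ∑ x : {x : Γ // (x : Γ ⧸ H) = q}, θ x = 0) :
    IsKotzigArraySet Γ 3 (Nat.card H) (Fintype.card Γ / Nat.card H) := by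
  have hT : Nat.card (Γ ⧸ H) = Fintype.card Γ / Nat.card H := by
    rw [← Nat.card_eq_fintype_card, AddSubgroup.card_eq_card_quotient_mul_card_addSubgroup H,
      Nat.mul_div_cancel _ Nat.card_pos]
  let eT : Fin (Fintype.card Γ / Nat.card H) ≃ Γ ⧸ H := (Finite.equivFinOfCardEq hT).symm
  have hfib : ∀ q : Γ ⧸ H, Nat.card {x : Γ // (x : Γ ⧸ H) = q} = Nat.card H := by
    intro q
    obtain ⟨r, rfl⟩ := QuotientAddGroup.mk_surjective q
    refine Nat.card_congr
      { toFun := fun x => ⟨-r + x, QuotientAddGroup.eq.1 x.2.symm⟩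
        invFun := fun h => ⟨r + h, by
          rw [QuotientAddGroup.mk_add, (QuotientAddGroup.eq_zero_iff (h : Γ)).2 h.2, add_zero]⟩
        right_inv := fun h => by simp
        left_inv := fun x => by simp }
  let eF : ∀ q : Γ ⧸ H, Fin (Nat.card H) ≃ {x : Γ // (x : Γ ⧸ H) = q} :=
    fun q => (Finite.equivFinOfCardEq (hfib q)).symm
  let E : Fin (Fintype.card Γ / Nat.card H) × Fin (Nat.card H) → Γ :=
    fun p => (eF (eT p.1) p.2 : Γ)
  have hE : Function.Bijective E := by
    constructor
    · rintro ⟨s, l⟩ ⟨s', l'⟩ h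
      simp only [E] at h
      have hs : s = s' := by
        apply eT.injective
        rw [← (eF (eT s) l).2, ← (eF (eT s') l').2, h]
      subst hs
      rw [(eF (eT s)).injective (Subtype.ext h)]
    · intro x
      refine ⟨(eT.symm (x : Γ ⧸ H), (eF _).symm ⟨x, (eT.apply_symm_apply _).symm⟩), ?_⟩
      simp only [E, Equiv.apply_symm_apply]
  have hs1 : ∀ s, ∑ l, E (s, l) = 0 := fun s => by
    simp only [E]
    rw [(eF (eT s)).sum_comp (fun x => (x : Γ))]
    exact sum_coset_eq_zero H hH hm _
  have hs2 : ∀ s, ∑ l, θ (E (s, l)) = 0 := fun s => by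
    simp only [E]
    rw [(eF (eT s)).sum_comp (fun x => θ (x : Γ))]
    exact h3 _
  refine ⟨fun p => ![E (p.1, p.2.2), θ (E (p.1, p.2.2)),
    -(E (p.1, p.2.2) + θ (E (p.1, p.2.2)))] p.2.1, ?_, ?_, ?_⟩
  · intro i
    fin_cases i
    · exact hE
    · exact h1.comp hE
    · exact (Equiv.neg Γ).bijective.comp (h2.comp hE)
  · intro s i
    fin_cases i
    · exact hs1 s
    · exact hs2 s
    · simp [Finset.sum_add_distrib, hs1, hs2]
  · intro s l
    simp [Fin.sum_univ_three]

theorem not_isAddCyclic_of_inClassG {Γ : Type*} [AddCommGroup Γ] [Fintype Γ] (hG : InClassG Γ)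
    (heven : ¬ Odd (Fintype.card Γ)) : ¬ IsAddCyclic Γ := by
  classical
  intro hc
  have h1 := hG.resolve_left heven
  have h2 := IsAddCyclic.card_nsmul_eq_zero_le (α := Γ) (n := 2) (by norm_num)
  have h3 : Nat.card {g : Γ // g ≠ 0 ∧ g + g = 0} =
      ((Finset.univ.filter (fun g : Γ => 2 • g = 0)).erase 0).card := by
    rw [Nat.card_eq_fintype_card, Fintype.card_subtype]
    congr 1
    ext g
    simp [two_nsmul]
  rw [Finset.card_erase_of_mem (by simp)] at h3
  omega

theorem stmt6 {Γ : Type*} [AddCommGroup Γ] [Fintype Γ] (hG : InClassG Γ)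
    (α : ℕ) (hα : 2 ≤ α) (hcard : Fintype.card Γ = 2 ^ α) (m : ℕ)
    (hm : m = if AddMonoid.exponent Γ = Fintype.card Γ / 2 then 2 * AddMonoid.exponent Γ
          else max 4 (AddMonoid.exponent Γ)) :
    IsKotzigArraySet Γ 3 m (Fintype.card Γ / m) := by
  classical
  have hcard' : Nat.card Γ = 2 ^ α := by rw [Nat.card_eq_fintype_card, hcard]
  have hc : ¬ IsAddCyclic Γ := not_isAddCyclic_of_inClassG hG (by
    rw [hcard, Nat.not_odd_iff_even]
    exact (even_two).pow_of_ne_zero (by omega))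
  obtain ⟨g, k, hg, hexp, he, hk⟩ := exists_max_order α hcard' hc
  have hhalf : (2 : ℕ) ^ α / 2 = 2 ^ (α - 1) := by
    obtain ⟨a, rfl⟩ : ∃ a, α = a + 1 := ⟨α - 1, by omega⟩
    rw [pow_succ]; simp
  have hexp' : AddMonoid.exponent Γ = 2 ^ (k + 1) := by rw [hexp, pow_succ, mul_comm]
  have hiff : AddMonoid.exponent Γ = Fintype.card Γ / 2 ↔ α = k + 2 := by
    rw [hcard, hhalf, hexp']
    constructor
    · intro h
      have := Nat.pow_right_injective le_rfl h
      omega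
    · rintro rfl; rfl
  by_cases hk1 : α = k + 2
  · rw [if_pos (hiff.2 hk1), hexp] at hm
    obtain ⟨θ, h1, h2⟩ := hasCompleteMapping_of_not_cyclic α Γ hcard' hc
    have hTc : Nat.card (⊤ : AddSubgroup Γ) = m := by
      rw [AddSubgroup.card_top, hcard', hm, hk1]; ring
    have hsum := HasCompleteMapping.sum_eq_zero ⟨θ, h1, h2⟩
    rw [← hTc]
    refine isKotzigArraySet_of_subgroup ⊤
      (HasCompleteMapping.of_equiv AddSubgroup.topEquiv.symm ⟨θ, h1, h2⟩) ?_ θ h1 h2 ?_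
    · intro x
      rw [hTc, hm, mul_smul, he, smul_zero]
    · intro q
      let e : {x : Γ // (x : Γ ⧸ (⊤ : AddSubgroup Γ)) = q} ≃ Γ :=
        Equiv.subtypeUnivEquiv (fun x => QuotientAddGroup.subsingleton_quotient_top.elim _ _)
      calc ∑ x : {x : Γ // (x : Γ ⧸ (⊤ : AddSubgroup Γ)) = q}, θ x = ∑ x, θ x :=
            Fintype.sum_equiv e _ _ (fun _ => rfl)
        _ = ∑ x, x := h1.sum_comp (fun x => x)
        _ = 0 := hsum
  · rw [if_neg (fun h => hk1 (hiff.1 h)), hexp] at hm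
    rcases Nat.eq_zero_or_pos k with rfl | hkpos
    · obtain ⟨u, hu, hug⟩ := exists_involution_not_mem α hcard' hc g (2 ^ 0) (by positivity) hg he
      obtain ⟨H, hH, hHc, -, -⟩ := exists_twoGen g u (2 ^ 0) (by positivity) hg hu hug
      obtain ⟨θ, h1, h2⟩ := exists_linear_completeMapping α hα hcard' (by simpa using he)
      have hHm : Nat.card H = m := by rw [hHc, hm]; norm_num
      have hkill : ∀ x : Γ, Nat.card H • x = 0 := fun x => by
        rw [hHc, show 4 * 2 ^ 0 = 2 * (2 * 2 ^ 0) by norm_num, mul_smul, he, smul_zero]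
      rw [← hHm]
      refine isKotzigArraySet_of_subgroup H hH hkill θ h1 h2 (fun q => ?_)
      rw [← map_sum, sum_coset_eq_zero H hH hkill, map_zero]
    · obtain ⟨l, rfl⟩ : ∃ l, k = l + 1 := ⟨k - 1, by omega⟩
      have hp : (2 : ℕ) ^ (l + 1) = 2 * 2 ^ l := by rw [pow_succ, mul_comm]
      rw [hp] at hg he hm
      obtain ⟨H, hH, hHc, hQ⟩ := exists_subgroup_step α hcard' hc g (2 ^ l) (by positivity) hg he
        (by rw [hcard', show 4 * (4 * 2 ^ l) = 2 ^ (l + 4) by ring]; exact pow_dvd_pow 2 (by omega))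
      have hpos : 0 < 2 ^ l := by positivity
      have hHm : Nat.card H = m := by rw [hHc, hm]; omega
      have hkill : ∀ x : Γ, Nat.card H • x = 0 := fun x => by
        rw [hHc, show 4 * 2 ^ l = 2 * (2 * 2 ^ l) by ring, he]
      have hQP : HasCompleteMapping (Γ ⧸ H) := by
        have hd : Nat.card (Γ ⧸ H) ∣ 2 ^ α := hcard' ▸ AddSubgroup.card_quotient_dvd_card H
        obtain ⟨b, -, hb⟩ := (Nat.dvd_prime_pow Nat.prime_two).1 hd
        exact hasCompleteMapping_of_not_cyclic b _ hb hQ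
      obtain ⟨θ, φ, h1, h2, h3, h4⟩ := exists_completeMapping_of_subgroup H hH hQP
      rw [← hHm]
      refine isKotzigArraySet_of_subgroup H hH hkill θ h1 h2 (fun q => ?_)
      -- `θ` carries the coset `q` bijectively onto the coset `φ q`, whose sum vanishes.
      let e : {x : Γ // (x : Γ ⧸ H) = q} ≃ {x : Γ // (x : Γ ⧸ H) = φ q} :=
        (Equiv.ofBijective θ h1).subtypeEquiv (fun x => by
          rw [Equiv.ofBijective_apply, h4, h3.1.eq_iff])
      rw [← sum_coset_eq_zero H hH hkill (φ q)]
      exact Fintype.sum_equiv e _ _ (fun _ => rfl)
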